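/- Let n ≥ 1 be a natural number and define V(f_n)(x) := (2n/x²)·f_n'(x)² − (2n(n−1)/x³)·f_n'(x)·f_n(x) − (2n(n−1)/x² − 2)·v(f_n)(x) for x > 0. Then V(f_n)(x) ≥ 0 for all x > 0, and the functions x ↦ x^{−2n}·V(f_n)(x) and x ↦ V(f_n)(x) are monotone increasing and positive on the interval (0, j'_{n+1/2,1}), where j'_{n+1/2,1} is the first positive zero of the derivative J_{n+1/2}'. -/

import Mathlib

/-- v h = (deriv h)^2 - (second derivative of h) * h. -/
noncomputable def v (f : ℝ → ℝ) (x : ℝ) : ℝ := (deriv f x) ^ 2 - deriv^[2] f x * f x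

/-- Bessel function of the first kind (for `x > 0`). -/
noncomputable def besselJ (ν : ℝ) (x : ℝ) : ℝ :=
  ∑' k : ℕ, (-1 : ℝ) ^ k / ((Nat.factorial k : ℝ) * Real.Gamma ((k : ℝ) + ν + 1)) *
    (x / 2) ^ (2 * (k : ℝ) + ν)

/-- `fn n x = √(π/2)·x^(n+1/2)·J_(n+1/2)(x)`, via the equivalent recursive definition
`fn 0 = sin`, `fn (n+1) x = ∫_0^x t·fn n t dt`. -/
noncomputable def fn : ℕ → ℝ → ℝ
  | 0 => fun x => Real.sin x
  | n + 1 => fun x => ∫ t in (0:ℝ)..x, t * fn n t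

/-- First positive zero of a function on `(0,∞)`. -/
noncomputable def j1 (g : ℝ → ℝ) : ℝ := sInf {x : ℝ | 0 < x ∧ g x = 0}

/-! If `f'' - (2n/x) f' + f = 0` on `(0, ∞)`, then `x^{-2n} V(f)` has derivative
`6n(n-1) x^{-4} T`, where `T` is a Turán determinant whose own derivative is the square
`2 x^{-2n} f'^2`. For `f = f_n` with `n ≥ 2` both `T` and `x^{-2n} V(f)` tend to `0` at `0⁺`, so
two integrations from `0` give first `T > 0` and then `V(f) > 0`, on all of `(0, ∞)`. For `n = 0`
and `n = 1` the quotient `x^{-2n} V(f_n)` is the constant `2`. -/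

open Filter Set Topology

section Calculus

lemma monotoneOn_Ioi_of_hasDerivAt_nonneg {F F' : ℝ → ℝ} {a : ℝ}
    (hF : ∀ x > a, HasDerivAt F (F' x) x) (hF' : ∀ x > a, 0 ≤ F' x) :
    MonotoneOn F (Ioi a) :=
  monotoneOn_of_hasDerivWithinAt_nonneg (f' := F') (convex_Ioi a)
    (fun x hx ↦ (hF x hx).continuousAt.continuousWithinAt)
    (fun x hx ↦ (hF x (interior_subset hx)).hasDerivWithinAt)
    (fun x hx ↦ hF' x (interior_subset hx))

lemma pos_of_tendsto_zero_of_hasDerivAt_nonneg {F F' : ℝ → ℝ} {a x : ℝ}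
    (hF : ∀ x > a, HasDerivAt F (F' x) x) (hF' : ∀ x > a, 0 ≤ F' x)
    (hpos : ∃ᶠ x in 𝓝[>] a, 0 < F' x) (hlim : Tendsto F (𝓝[>] a) (𝓝 0)) (hx : a < x) :
    0 < F x := by
  have hmono := monotoneOn_Ioi_of_hasDerivAt_nonneg hF hF'
  have hnonneg : ∀ y > a, 0 ≤ F y := fun y hy ↦ by
    refine le_of_tendsto hlim ?_
    filter_upwards [Ioo_mem_nhdsGT hy] with z hz using hmono hz.1 hy hz.2.le
  refine (hnonneg x hx).lt_of_ne fun hzero ↦ ?_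
  have hvanish : ∀ y ∈ Ioo a x, F y = 0 := fun y hy ↦
    le_antisymm ((hmono hy.1 hx hy.2.le).trans hzero.ge) (hnonneg y hy.1)
  obtain ⟨y, hy', hy⟩ := (hpos.and_eventually (Ioo_mem_nhdsGT hx)).exists
  have hlocal : F =ᶠ[𝓝 y] fun _ ↦ 0 := by
    filter_upwards [Ioo_mem_nhds hy.1 hy.2] with z hz using hvanish z hz
  have hderiv : F' y = 0 :=
    (hF y hy.1).unique ((hasDerivAt_const y (0 : ℝ)).congr_of_eventuallyEq hlocal)
  exact hy'.ne' hderiv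

lemma hasDerivAt_inv_pow {𝕜 : Type*} [NontriviallyNormedField 𝕜] (k : ℕ) {x : 𝕜} (hx : x ≠ 0) :
    HasDerivAt (fun y ↦ (y ^ k)⁻¹) (-(k / x * (x ^ k)⁻¹)) x := by
  refine ((hasDerivAt_pow k x).inv (pow_ne_zero k hx)).congr_deriv ?_
  rcases k with _ | k
  · simp
  · simp only [Nat.add_sub_cancel]
    field_simp
    ring

lemma monotoneOn_of_monotoneOn_inv_mul {α 𝕜 : Type*} [Preorder α] [Field 𝕜] [LinearOrder 𝕜]
    [IsStrictOrderedRing 𝕜] {F g : α → 𝕜} {s : Set α} (hg : MonotoneOn g s)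
    (hg' : ∀ x ∈ s, 0 < g x) (hF : ∀ x ∈ s, 0 ≤ F x)
    (h : MonotoneOn (fun x ↦ (g x)⁻¹ * F x) s) : MonotoneOn F s := fun x hx y hy hxy ↦ by
  have := hg' x hx
  have := hg' y hy
  have := hF x hx
  calc
    F x = g x * ((g x)⁻¹ * F x) := by field_simp
    _ ≤ g y * ((g y)⁻¹ * F y) :=
      mul_le_mul (hg hx hy hxy) (h hx hy hxy) (by positivity) (by positivity)
    _ = F y := by field_simp

end Calculus

/-- `f` solves `f'' - (2n/x) f' + f = 0` on `(0, ∞)`, the equation satisfied by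
`x ^ (n + 1/2) * J_{n + 1/2}(x)`. The second derivative is given by a `HasDerivAt` statement, so
that twice differentiability is part of the notion. -/
structure IsBesselSolution (n : ℕ) (f : ℝ → ℝ) : Prop where
  hasDerivAt : ∀ x > 0, HasDerivAt f (deriv f x) x
  hasDerivAt_deriv : ∀ x > 0, HasDerivAt (deriv f) (2 * n / x * deriv f x - f x) x

/-- The expression `V(f)` attached to the equation `f'' + p f' + q f = 0`, for the coefficients
`p(x) = -2n/x` and `q = 1` of `IsBesselSolution n`. -/
noncomputable def V (n : ℕ) (f : ℝ → ℝ) (x : ℝ) : ℝ :=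
  2 * n / x ^ 2 * deriv f x ^ 2 - 2 * n * (n - 1) / x ^ 3 * (deriv f x * f x) -
    (2 * n * (n - 1) / x ^ 2 - 2) * v f x

/-- The scaled Turán determinant of `f`, written in terms of `f` and `f'`: for
`f = x ^ ν * J_ν` with `ν = n + 1/2` it equals `x ^ 2 * (J_{ν-1} ^ 2 - J_{ν-2} * J_ν)`. -/
noncomputable def turan (n : ℕ) (f : ℝ → ℝ) (x : ℝ) : ℝ :=
  (x ^ (2 * n))⁻¹ * (x * deriv f x ^ 2 - (2 * n - 1) * (f x * deriv f x) + x * f x ^ 2)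

lemma tendsto_turan_zero {n : ℕ} {f : ℝ → ℝ}
    (h₀ : Tendsto (fun y ↦ f y / y ^ n) (𝓝[>] 0) (𝓝 0))
    (h₁ : Tendsto (fun y ↦ deriv f y / y ^ n) (𝓝[>] 0) (𝓝 0)) :
    Tendsto (turan n f) (𝓝[>] 0) (𝓝 0) := by
  have hy : Tendsto (fun y : ℝ ↦ y) (𝓝[>] 0) (𝓝 0) := tendsto_id.mono_left nhdsWithin_le_nhds
  have hlim := ((hy.mul (h₁.pow 2)).sub ((h₀.mul h₁).const_mul (2 * (n : ℝ) - 1))).add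
    (hy.mul (h₀.pow 2))
  refine (hlim.congr fun y ↦ ?_).trans (by simp)
  rw [turan, pow_mul']
  ring

namespace IsBesselSolution

variable {n : ℕ} {f : ℝ → ℝ} {x : ℝ}

lemma v_eq (hf : IsBesselSolution n f) (hx : 0 < x) :
    v f x = deriv f x ^ 2 - 2 * n / x * (f x * deriv f x) + f x ^ 2 := by
  have hderiv : deriv^[2] f x = 2 * n / x * deriv f x - f x := (hf.hasDerivAt_deriv x hx).deriv
  rw [v, hderiv]
  ring

lemma hasDerivAt_turan (hf : IsBesselSolution n f) (hx : 0 < x) :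
    HasDerivAt (turan n f) (2 * deriv f x ^ 2 / x ^ (2 * n)) x := by
  have h₀ := hf.hasDerivAt x hx
  have h₁ := hf.hasDerivAt_deriv x hx
  have hid := hasDerivAt_id' x
  refine ((hasDerivAt_inv_pow (2 * n) hx.ne').mul
    (((hid.mul (h₁.pow 2)).sub ((h₀.mul h₁).const_mul (2 * (n : ℝ) - 1))).add
      (hid.mul (h₀.pow 2)))).congr_deriv ?_
  simp only [Pi.add_apply, Pi.sub_apply, Pi.mul_apply, Pi.pow_apply]
  push_cast
  field_simp
  ring

lemma hasDerivAt_v (hf : IsBesselSolution n f) (hx : 0 < x) :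
    HasDerivAt (v f) (2 * n / x * v f x + 2 * n / x ^ 2 * (f x * deriv f x)) x := by
  have h₀ := hf.hasDerivAt x hx
  have h₁ := hf.hasDerivAt_deriv x hx
  have heq : v f =ᶠ[𝓝 x]
      fun y ↦ deriv f y ^ 2 - 2 * n * y⁻¹ * (f y * deriv f y) + f y ^ 2 := by
    filter_upwards [Ioi_mem_nhds hx] with y hy
    rw [hf.v_eq hy, div_eq_mul_inv]
  refine (((h₁.pow 2).sub (((hasDerivAt_inv hx.ne').const_mul (2 * (n : ℝ))).mul
    (h₀.mul h₁))).add (h₀.pow 2)).congr_deriv ?_ |>.congr_of_eventuallyEq heq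
  rw [hf.v_eq hx]
  simp only [Pi.mul_apply]
  push_cast
  field_simp
  ring

lemma hasDerivAt_inv_pow_mul_V (hf : IsBesselSolution n f) (hx : 0 < x) :
    HasDerivAt (fun y ↦ (y ^ (2 * n))⁻¹ * V n f y) (6 * n * (n - 1) / x ^ 4 * turan n f x) x := by
  have h₀ := hf.hasDerivAt x hx
  have h₁ := hf.hasDerivAt_deriv x hx
  have hpow (k : ℕ) := hasDerivAt_inv_pow k hx.ne'
  have hV : V n f = fun y ↦ 2 * n * (y ^ 2)⁻¹ * deriv f y ^ 2 -
      2 * n * (n - 1) * (y ^ 3)⁻¹ * (deriv f y * f y) -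
        (2 * n * (n - 1) * (y ^ 2)⁻¹ - 2) * v f y := rfl
  rw [hV]
  refine ((hpow (2 * n)).mul
    (((((hpow 2).const_mul (2 * (n : ℝ))).mul (h₁.pow 2)).sub
      (((hpow 3).const_mul (2 * (n : ℝ) * (n - 1))).mul (h₁.mul h₀))).sub
      ((((hpow 2).const_mul (2 * (n : ℝ) * (n - 1))).sub_const 2).mul
        (hf.hasDerivAt_v hx)))).congr_deriv ?_
  simp only [Pi.sub_apply, Pi.mul_apply, Pi.pow_apply, hf.v_eq hx, turan]
  push_cast
  field_simp
  ring

lemma tendsto_inv_pow_mul_V_zero (hf : IsBesselSolution n f)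
    (h₀ : Tendsto (fun y ↦ f y / y ^ (n + 2)) (𝓝[>] 0) (𝓝 0))
    (h₁ : Tendsto (fun y ↦ deriv f y / y ^ (n + 1)) (𝓝[>] 0) (𝓝 0)) :
    Tendsto (fun y ↦ (y ^ (2 * n))⁻¹ * V n f y) (𝓝[>] 0) (𝓝 0) := by
  have hy : Tendsto (fun y : ℝ ↦ y) (𝓝[>] 0) (𝓝 0) := tendsto_id.mono_left nhdsWithin_le_nhds
  have hlim := (((h₁.pow 2).const_mul (2 * (n : ℝ))).sub
    ((h₁.mul h₀).const_mul (2 * (n : ℝ) * (n - 1)))).sub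
      (((hy.pow 2).const_mul 2).const_sub (2 * (n : ℝ) * (n - 1)) |>.mul
        (((h₁.pow 2).sub ((h₀.mul h₁).const_mul (2 * (n : ℝ)))).add
          ((hy.pow 2).mul (h₀.pow 2))))
  refine (hlim.congr' ?_).trans (by simp)
  filter_upwards [self_mem_nhdsWithin] with y (hy : 0 < y)
  rw [V, hf.v_eq hy]
  field_simp
  ring

lemma turan_pos (hf : IsBesselSolution n f)
    (h₀ : Tendsto (fun y ↦ f y / y ^ n) (𝓝[>] 0) (𝓝 0))
    (h₁ : Tendsto (fun y ↦ deriv f y / y ^ n) (𝓝[>] 0) (𝓝 0))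
    (hne : ∃ᶠ y in 𝓝[>] 0, deriv f y ≠ 0) (hx : 0 < x) : 0 < turan n f x := by
  refine pos_of_tendsto_zero_of_hasDerivAt_nonneg (fun y hy ↦ hf.hasDerivAt_turan hy)
    (fun y hy ↦ by positivity) ?_ (tendsto_turan_zero h₀ h₁) hx
  refine (hne.and_eventually self_mem_nhdsWithin).mono fun y ⟨hy', (hy : 0 < y)⟩ ↦ ?_
  positivity

lemma V_pos (hf : IsBesselSolution n f) (hn : 2 ≤ n) (hturan : ∀ y > 0, 0 < turan n f y)
    (h₀ : Tendsto (fun y ↦ f y / y ^ (n + 2)) (𝓝[>] 0) (𝓝 0))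
    (h₁ : Tendsto (fun y ↦ deriv f y / y ^ (n + 1)) (𝓝[>] 0) (𝓝 0)) (hx : 0 < x) :
    0 < V n f x := by
  have hn' : (0 : ℝ) < n - 1 := by
    have : (2 : ℝ) ≤ n := by exact_mod_cast hn
    linarith
  have hderiv_pos : ∀ y > 0, 0 < 6 * n * (n - 1) / y ^ 4 * turan n f y := fun y hy ↦ by
    have := hturan y hy
    positivity
  have hfreq : ∃ᶠ y in 𝓝[>] (0 : ℝ), 0 < 6 * n * (n - 1) / y ^ 4 * turan n f y :=
    Eventually.frequently (f := 𝓝[>] 0) (eventually_nhdsWithin_of_forall hderiv_pos)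
  have hpos := pos_of_tendsto_zero_of_hasDerivAt_nonneg
    (fun y hy ↦ hf.hasDerivAt_inv_pow_mul_V hy) (fun y hy ↦ (hderiv_pos y hy).le)
    hfreq (hf.tendsto_inv_pow_mul_V_zero h₀ h₁) hx
  exact pos_of_mul_pos_right hpos (by positivity)

end IsBesselSolution

section Fn

variable (n : ℕ) {x : ℝ}

lemma continuous_fn : Continuous (fn n) := by
  induction n with
  | zero => exact Real.continuous_sin
  | succ n ih =>
    exact intervalIntegral.continuous_primitive
      (fun a b ↦ (continuous_id.mul ih).intervalIntegrable a b) 0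

lemma fn_apply_zero : fn n 0 = 0 := by
  cases n <;> simp [fn]

lemma hasDerivAt_fn_succ (x : ℝ) : HasDerivAt (fn (n + 1)) (x * fn n x) x :=
  (continuous_id.mul (continuous_fn n)).integral_hasStrictDerivAt 0 x |>.hasDerivAt

lemma deriv_fn_zero : deriv (fn 0) = Real.cos := Real.deriv_sin

lemma deriv_fn_succ : deriv (fn (n + 1)) = fun x ↦ x * fn n x :=
  funext fun x ↦ (hasDerivAt_fn_succ n x).deriv

lemma differentiable_fn : Differentiable ℝ (fn n) := by
  cases n with
  | zero => exact Real.differentiable_sin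
  | succ n => exact fun x ↦ (hasDerivAt_fn_succ n x).differentiableAt

lemma differentiable_deriv_fn : Differentiable ℝ (deriv (fn n)) := by
  cases n with
  | zero => exact deriv_fn_zero ▸ Real.differentiable_cos
  | succ n => exact deriv_fn_succ n ▸ differentiable_id.mul (differentiable_fn n)

variable {n} in
lemma fn_succ_eq_of_mul_deriv_deriv_eq
    (hode : ∀ x, x * deriv (deriv (fn n)) x = 2 * n * deriv (fn n) x - x * fn n x) (x : ℝ) :
    fn (n + 1) x = (2 * n + 1) * fn n x - x * deriv (fn n) x := by
  have hderiv (y : ℝ) :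
      HasDerivAt (fun z ↦ fn (n + 1) z - ((2 * n + 1) * fn n z - z * deriv (fn n) z)) 0 y := by
    refine ((hasDerivAt_fn_succ n y).sub
      (((differentiable_fn n y).hasDerivAt.const_mul (2 * (n : ℝ) + 1)).sub
        ((hasDerivAt_id' y).mul (differentiable_deriv_fn n y).hasDerivAt))).congr_deriv ?_
    linear_combination hode y
  have hconst := is_const_of_deriv_eq_zero (fun y ↦ (hderiv y).differentiableAt)
    (fun y ↦ (hderiv y).deriv) x 0
  simp only [fn_apply_zero, mul_zero, zero_mul, sub_zero] at hconst
  linarith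

lemma mul_deriv_deriv_fn (x : ℝ) :
    x * deriv (deriv (fn n)) x = 2 * n * deriv (fn n) x - x * fn n x := by
  induction n generalizing x with
  | zero => simp [fn]
  | succ n ih =>
    have hderiv : deriv (deriv (fn (n + 1))) x = fn n x + x * deriv (fn n) x := by
      rw [deriv_fn_succ]
      simp [deriv_fun_mul differentiableAt_fun_id (differentiable_fn n x)]
    rw [hderiv, fn_succ_eq_of_mul_deriv_deriv_eq ih, deriv_fn_succ]
    push_cast
    ring

lemma isBesselSolution_fn : IsBesselSolution n (fn n) where
  hasDerivAt x _ := (differentiable_fn n x).hasDerivAt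
  hasDerivAt_deriv x hx := by
    refine (differentiable_deriv_fn n x).hasDerivAt.congr_deriv ?_
    have := mul_deriv_deriv_fn n x
    field_simp
    linarith

lemma fn_one (x : ℝ) : fn 1 x = Real.sin x - x * Real.cos x := by
  simpa [deriv_fn_zero, fn] using fn_succ_eq_of_mul_deriv_deriv_eq (mul_deriv_deriv_fn 0) x

lemma fn_pos_of_mem_Ioo_zero_pi (hx : x ∈ Ioo 0 Real.pi) : 0 < fn n x := by
  induction n generalizing x with
  | zero => exact Real.sin_pos_of_mem_Ioo hx
  | succ n ih =>
    exact intervalIntegral.intervalIntegral_pos_of_pos_on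
      ((continuous_id.mul (continuous_fn n)).intervalIntegrable 0 x)
      (fun t ht ↦ mul_pos ht.1 (ih ⟨ht.1, ht.2.trans hx.2⟩)) hx.1

lemma tendsto_fn_nhdsGT_zero : Tendsto (fn n) (𝓝[>] 0) (𝓝 0) :=
  ((continuous_fn n).tendsto' 0 0 (fn_apply_zero n)).mono_left nhdsWithin_le_nhds

lemma tendsto_fn_div_pow_two_mul : Tendsto (fun x ↦ fn n x / x ^ (2 * n)) (𝓝[>] 0) (𝓝 0) := by
  induction n with
  | zero => simpa using tendsto_fn_nhdsGT_zero 0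
  | succ n ih =>
    refine HasDerivAt.lhopital_zero_nhdsGT (.of_forall (hasDerivAt_fn_succ n))
      (.of_forall (hasDerivAt_pow (2 * (n + 1)))) ?_ (tendsto_fn_nhdsGT_zero (n + 1)) ?_ ?_
    · filter_upwards [self_mem_nhdsWithin] with x (hx : 0 < x)
      positivity
    · exact ((continuous_pow _).tendsto' 0 0 (by simp)).mono_left nhdsWithin_le_nhds
    · refine ((ih.div_const (2 * (n + 1))).congr' ?_).trans (by simp)
      filter_upwards [self_mem_nhdsWithin] with x (hx : 0 < x)
      rw [show 2 * (n + 1) - 1 = 2 * n + 1 by lia]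
      push_cast
      field_simp
      ring

variable {n}

lemma tendsto_fn_div_pow {k : ℕ} (hk : k ≤ 2 * n) :
    Tendsto (fun x ↦ fn n x / x ^ k) (𝓝[>] 0) (𝓝 0) := by
  obtain ⟨j, hj⟩ := Nat.exists_eq_add_of_le hk
  have hpow : Tendsto (fun x : ℝ ↦ x ^ j) (𝓝[>] 0) (𝓝 (0 ^ j)) :=
    (continuous_pow j).continuousAt.tendsto.mono_left nhdsWithin_le_nhds
  refine ((tendsto_fn_div_pow_two_mul n).mul hpow |>.congr' ?_).trans (by simp)
  filter_upwards [self_mem_nhdsWithin] with x (hx : 0 < x)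
  rw [hj]
  field_simp
  ring

lemma tendsto_deriv_fn_succ_div_pow_succ {k : ℕ} (hk : k ≤ 2 * n) :
    Tendsto (fun x ↦ deriv (fn (n + 1)) x / x ^ (k + 1)) (𝓝[>] 0) (𝓝 0) := by
  refine (tendsto_fn_div_pow hk).congr' ?_
  filter_upwards [self_mem_nhdsWithin] with x (hx : 0 < x)
  rw [deriv_fn_succ]
  field_simp
  ring

lemma turan_fn_pos (hn : 1 ≤ n) (hx : 0 < x) : 0 < turan n (fn n) x := by
  obtain ⟨m, rfl⟩ := Nat.exists_eq_add_of_le' hn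
  refine (isBesselSolution_fn (m + 1)).turan_pos (tendsto_fn_div_pow (by lia))
    (tendsto_deriv_fn_succ_div_pow_succ (by lia)) (Eventually.frequently ?_) hx
  filter_upwards [Ioo_mem_nhdsGT Real.pi_pos] with y hy
  rw [deriv_fn_succ]
  exact (mul_pos hy.1 (fn_pos_of_mem_Ioo_zero_pi m hy)).ne'

lemma V_fn_of_le_one (hn : n ≤ 1) (hx : 0 < x) : V n (fn n) x = 2 * x ^ (2 * n) := by
  rw [V, (isBesselSolution_fn n).v_eq hx]
  interval_cases n
  · simp [fn]
  · rw [deriv_fn_succ, fn_one, fn]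
    push_cast
    field_simp
    linear_combination x ^ 4 * Real.sin_sq_add_cos_sq x

lemma V_fn_pos (hx : 0 < x) : 0 < V n (fn n) x := by
  rcases le_or_gt n 1 with hn | hn
  · rw [V_fn_of_le_one hn hx]
    positivity
  · obtain ⟨m, rfl⟩ := Nat.exists_eq_add_of_le' hn.le
    exact (isBesselSolution_fn (m + 1)).V_pos hn (fun y hy ↦ turan_fn_pos hn.le hy)
      (tendsto_fn_div_pow (by lia)) (tendsto_deriv_fn_succ_div_pow_succ (by lia)) hx

lemma monotoneOn_inv_pow_mul_V_fn :
    MonotoneOn (fun x ↦ (x ^ (2 * n))⁻¹ * V n (fn n) x) (Ioi 0) := by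
  refine monotoneOn_Ioi_of_hasDerivAt_nonneg
    (fun x hx ↦ (isBesselSolution_fn n).hasDerivAt_inv_pow_mul_V hx) fun x hx ↦ ?_
  rcases n.eq_zero_or_pos with rfl | hn
  · simp
  · have hn' : (0 : ℝ) ≤ n - 1 := sub_nonneg.2 (by exact_mod_cast hn)
    have := turan_fn_pos hn hx
    positivity

end Fn

theorem stmt_18_general (n : ℕ) (V' : ℝ → ℝ)
    (hV : ∀ x > (0 : ℝ), V' x =
      2 * (n : ℝ) / x ^ 2 * (deriv (fn n) x) ^ 2 -
        2 * (n : ℝ) * ((n : ℝ) - 1) / x ^ 3 * (deriv (fn n) x * fn n x) -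
        (2 * (n : ℝ) * ((n : ℝ) - 1) / x ^ 2 - 2) * v (fn n) x) :
    (∀ x > (0 : ℝ), 0 < V' x) ∧ MonotoneOn (fun x ↦ (x ^ (2 * n))⁻¹ * V' x) (Ioi 0) ∧
      MonotoneOn V' (Ioi 0) := by
  have hVfn : EqOn V' (V n (fn n)) (Ioi 0) := hV
  have hpos : ∀ x > (0 : ℝ), 0 < V' x := fun x hx ↦ (V_fn_pos hx).trans_eq (hVfn hx).symm
  have hscaled : MonotoneOn (fun x ↦ (x ^ (2 * n))⁻¹ * V' x) (Ioi 0) :=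
    (monotoneOn_inv_pow_mul_V_fn (n := n)).congr fun x hx ↦ by simp only [hVfn hx]
  have hpow : MonotoneOn (fun x : ℝ ↦ x ^ (2 * n)) (Ioi 0) := fun x hx y _ hxy ↦
    pow_le_pow_left₀ (le_of_lt hx) hxy _
  exact ⟨hpos, hscaled, monotoneOn_of_monotoneOn_inv_mul hpow (fun x hx ↦ pow_pos hx _)
    (fun x hx ↦ (hpos x hx).le) hscaled⟩

theorem stmt_18 (n : ℕ) (hn : 1 ≤ n) (V' : ℝ → ℝ)
    (hV : ∀ x > (0 : ℝ), V' x =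
      2 * (n : ℝ) / x ^ 2 * (deriv (fn n) x) ^ 2 -
        2 * (n : ℝ) * ((n : ℝ) - 1) / x ^ 3 * (deriv (fn n) x * fn n x) -
        (2 * (n : ℝ) * ((n : ℝ) - 1) / x ^ 2 - 2) * v (fn n) x) :
    (∀ x > (0 : ℝ), 0 ≤ V' x) ∧
    MonotoneOn (fun x => (x ^ (2 * n))⁻¹ * V' x)
      (Set.Ioo (0 : ℝ) (j1 (deriv (besselJ ((n : ℝ) + 1 / 2))))) ∧
    (∀ x ∈ Set.Ioo (0 : ℝ) (j1 (deriv (besselJ ((n : ℝ) + 1 / 2)))),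
      0 < (x ^ (2 * n))⁻¹ * V' x) ∧
    MonotoneOn V' (Set.Ioo (0 : ℝ) (j1 (deriv (besselJ ((n : ℝ) + 1 / 2))))) ∧
    (∀ x ∈ Set.Ioo (0 : ℝ) (j1 (deriv (besselJ ((n : ℝ) + 1 / 2)))), 0 < V' x) := by
  obtain ⟨hpos, hscaled, hmono⟩ := stmt_18_general n V' hV
  exact ⟨fun x hx ↦ (hpos x hx).le, hscaled.mono Ioo_subset_Ioi_self,
    fun x hx ↦ mul_pos (inv_pos.2 (pow_pos hx.1 _)) (hpos x hx.1),
    hmono.mono Ioo_subset_Ioi_self, fun x hx ↦ hpos x hx.1⟩
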